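/- arXiv:1404.6429 — 2 statements merged into one kernel-verified Lean document; each statement's English description precedes it below -/
import Mathlib

section
/- Let 0 < R < 1/2, let g₀ be the function whose Fourier transform is ĝ₀(u) = cos(πu/(2R)) on [−R,R] and 0 outside, i.e. g₀(x) = ∫_{−R}^{R} cos(πu/(2R)) e^{2iπxu} du. Let Φ(x) = (x² − β²) g₀(x)². Then the Fourier transform of Φ at 0 equals 1/(16R) − β²R and Φ(0) = −16β²R²/π². -/
open Real MeasureTheory

open scoped FourierTransform

namespace PhiAux

/-- The cut-off cosine. Clamping the argument makes continuity automatic. -/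
noncomputable def w (R : ℝ) (u : ℝ) : ℂ :=
  ((Real.cos (Real.pi * (max (-R) (min u R)) / (2 * R)) : ℝ) : ℂ)

lemma w_cont (R : ℝ) : Continuous (w R) := by
  unfold w; fun_prop

lemma w_in {R u : ℝ} (h1 : -R ≤ u) (h2 : u ≤ R) :
    w R u = ((Real.cos (Real.pi * u / (2 * R)) : ℝ) : ℂ) := by
  rw [w, min_eq_left h2, max_eq_right h1]

lemma cos_R {R : ℝ} (hR : 0 < R) : Real.cos (Real.pi * R / (2 * R)) = 0 := by
  rw [show Real.pi * R / (2 * R) = Real.pi / 2 by field_simp]; simp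

lemma cos_negR {R : ℝ} (hR : 0 < R) : Real.cos (Real.pi * (-R) / (2 * R)) = 0 := by
  rw [show Real.pi * (-R) / (2 * R) = -(Real.pi / 2) by field_simp]; simp

lemma w_right {R u : ℝ} (hR : 0 < R) (h : R ≤ u) : w R u = 0 := by
  rw [w, min_eq_right h, max_eq_right (by linarith), cos_R hR]; simp

lemma w_left {R u : ℝ} (hR : 0 < R) (h : u ≤ -R) : w R u = 0 := by
  rw [w, min_eq_left (by linarith), max_eq_left h, cos_negR hR]; simp

lemma w_even {R : ℝ} (hR : 0 < R) (u : ℝ) : w R (-u) = w R u := by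
  rcases le_total R u with h | h
  · rw [w_right hR h, w_left hR (by linarith)]
  rcases le_total u (-R) with h' | h'
  · rw [w_left hR h', w_right hR (by linarith)]
  rw [w_in h' h, w_in (by linarith) (by linarith)]
  rw [show Real.pi * (-u) / (2 * R) = -(Real.pi * u / (2 * R)) by ring, Real.cos_neg]

lemma w_support {R : ℝ} (hR : 0 < R) : Function.support (w R) ⊆ Set.Ioc (-R) R := by
  intro u hu
  constructor
  · by_contra h
    exact hu (w_left hR (not_lt.mp h))
  · by_contra h
    exact hu (w_right hR (not_le.mp h).le)

lemma w_int {R : ℝ} (hR : 0 < R) : Integrable (w R) := by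
  apply (w_cont R).integrable_of_hasCompactSupport
  exact HasCompactSupport.intro (isCompact_Icc (a := -R) (b := R)) (fun x hx => by
    by_contra h
    exact hx (Set.Ioc_subset_Icc_self (w_support hR h)))

lemma w_fourierInv {R : ℝ} (hR : 0 < R) (f : ℝ → ℂ) :
    ∫ u, f u * w R u = ∫ u in (-R)..R, f u * (Real.cos (Real.pi * u / (2 * R)) : ℂ) := by
  rw [← intervalIntegral.integral_eq_integral_of_support_subset (a := -R) (b := R)]
  · apply intervalIntegral.integral_congr
    intro u hu
    rw [Set.uIcc_of_le (by linarith)] at hu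
    simp only
    rw [w_in hu.1 hu.2]
  · exact (Function.support_mul_subset_right _ _).trans (w_support hR)

lemma key {R : ℝ} (hR : 0 < R) (x : ℝ) :
    (((Real.pi / (2 * R) : ℝ) : ℂ) ^ 2 - (2 * Real.pi * x) ^ 2) *
      (∫ u in (-R)..R, (Real.cos (Real.pi * u / (2 * R)) : ℂ) *
        Complex.exp (2 * Real.pi * Complex.I * x * u))
     = ((Real.pi / (2 * R) : ℝ) : ℂ) * (Complex.exp (2 * Real.pi * Complex.I * x * R) +
        Complex.exp (2 * Real.pi * Complex.I * x * (-R))) := by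
  set c : ℝ := Real.pi / (2 * R) with hc
  have hcu : ∀ u : ℝ, Real.pi * u / (2 * R) = c * u := fun u => by rw [hc]; ring
  have hcR : c * R = Real.pi / 2 := by rw [hc]; field_simp
  simp_rw [hcu]
  rw [← intervalIntegral.integral_const_mul]
  have hd : ∀ u ∈ Set.uIcc (-R) R, HasDerivAt (fun u : ℝ =>
      Complex.exp (2 * Real.pi * Complex.I * x * u) *
      ((c : ℂ) * ((Real.sin (c * u) : ℝ) : ℂ) +
        2 * Real.pi * Complex.I * x * ((Real.cos (c * u) : ℝ) : ℂ)))
      (((c : ℂ) ^ 2 - (2 * Real.pi * x) ^ 2) * ((Real.cos (c * u) : ℂ) *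
        Complex.exp (2 * Real.pi * Complex.I * x * u))) u := by
    intro u _
    have hcu : HasDerivAt (fun u : ℝ => c * u) c u := by
      simpa using (hasDerivAt_id u).const_mul c
    have hs := (hcu.sin).ofReal_comp
    have hk := (hcu.cos).ofReal_comp
    have he : HasDerivAt (fun u : ℝ => Complex.exp (2 * Real.pi * Complex.I * x * u))
        (Complex.exp (2 * Real.pi * Complex.I * x * u) * (2 * Real.pi * Complex.I * x)) u := by
      have h0 : HasDerivAt (fun u : ℝ => 2 * Real.pi * Complex.I * x * (u : ℂ))
        (2 * Real.pi * Complex.I * x) u := by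
        simpa using (Complex.ofRealCLM.hasDerivAt (x := u)).const_mul
          (2 * Real.pi * Complex.I * x : ℂ)
      exact h0.cexp
    have := he.mul ((hs.const_mul (c : ℂ)).add
      (hk.const_mul (2 * Real.pi * Complex.I * x : ℂ)))
    refine this.congr_deriv ?_
    simp only [Pi.add_apply]
    push_cast
    linear_combination (4 * (Real.pi : ℂ) ^ 2 * x ^ 2 * Complex.cos (c * u) *
      Complex.exp (2 * Real.pi * Complex.I * x * u)) * Complex.I_sq
  rw [intervalIntegral.integral_eq_sub_of_hasDerivAt hd]
  · simp only [mul_neg, hcR, Real.sin_neg, Real.cos_neg, Real.sin_pi_div_two, Real.cos_pi_div_two,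
      Complex.ofReal_neg, Complex.ofReal_one, Complex.ofReal_zero]
    ring
  · apply Continuous.intervalIntegrable
    fun_prop

lemma int_cos_sq {R : ℝ} (hR : 0 < R) :
    ∫ u in (-R)..R, Real.cos (Real.pi * u / (2 * R)) ^ 2 = R := by
  set c : ℝ := Real.pi / (2 * R) with hc
  have hcu : ∀ u : ℝ, Real.pi * u / (2 * R) = c * u := fun u => by rw [hc]; ring
  have hcR : c * R = Real.pi / 2 := by rw [hc]; field_simp
  have hc0 : c ≠ 0 := by rw [hc]; positivity
  simp_rw [hcu]
  have hd : ∀ u ∈ Set.uIcc (-R) R, HasDerivAt (fun u : ℝ =>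
      u / 2 + Real.sin (c * u) * Real.cos (c * u) / (2 * c)) (Real.cos (c * u) ^ 2) u := by
    intro u _
    have hcu : HasDerivAt (fun u : ℝ => c * u) c u := by
      simpa using (hasDerivAt_id u).const_mul c
    refine (((hasDerivAt_id u).div_const 2).add
      ((hcu.sin.mul hcu.cos).div_const (2 * c))).congr_deriv ?_
    field_simp
    linear_combination - Real.sin_sq_add_cos_sq (c * u)
  rw [intervalIntegral.integral_eq_sub_of_hasDerivAt hd]
  · simp only [mul_neg, hcR, Real.sin_neg, Real.cos_neg, Real.cos_pi_div_two]
    ring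
  · apply Continuous.intervalIntegrable
    fun_prop

end PhiAux

open PhiAux in
/-- With `g₀(x) = ∫_{-R}^{R} cos(πu/(2R)) e^{2iπxu} du` and
`Φ(x) = (x² - β²) g₀(x)²`, the Fourier transform of `Φ` at `0` (i.e. `∫ Φ`)
equals `1/(16R) - β²R`, and `Φ(0) = -16β²R²/π²`. -/
theorem fourier_transform_phi_at_zero (R β : ℝ) (hR : 0 < R) (hR' : R < 1 / 2)
    (g₀ : ℝ → ℂ)
    (hg₀ : ∀ x : ℝ, g₀ x = ∫ u in (-R)..R,
      (Real.cos (Real.pi * u / (2 * R)) : ℂ) *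
        Complex.exp (2 * Real.pi * Complex.I * x * u))
    (Φ : ℝ → ℂ) (hΦ : ∀ x : ℝ, Φ x = ((x : ℂ) ^ 2 - (β : ℂ) ^ 2) * (g₀ x) ^ 2) :
    (∫ x : ℝ, Φ x) = ((1 / (16 * R) - β ^ 2 * R : ℝ) : ℂ) ∧
      Φ 0 = ((-(16 * β ^ 2 * R ^ 2) / Real.pi ^ 2 : ℝ) : ℂ) := by
  have hkey := fun x => key hR x
  simp_rw [← hg₀] at hkey
  have hpi : (Real.pi : ℂ) ≠ 0 := by exact_mod_cast Real.pi_ne_zero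
  have hRc : (R : ℂ) ≠ 0 := by exact_mod_cast hR.ne'
  have hinv : 𝓕⁻ (w R) = g₀ := by
    ext x
    rw [Real.fourierInv_eq', hg₀]
    simp_rw [smul_eq_mul]
    rw [w_fourierInv hR]
    apply intervalIntegral.integral_congr
    intro u _
    simp only
    rw [mul_comm]
    congr 2
    simp
    ring
  have hF : 𝓕 (w R) = g₀ := by
    rw [← hinv, Real.fourierInv_eq_fourier_comp_neg]
    simp_rw [w_even hR]
  have hcont : Continuous g₀ := by
    rw [← hF]
    exact VectorFourier.fourierIntegral_continuous Real.continuous_fourierChar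
      (innerSL ℝ).continuous₂ (w_int hR)
  have hexp : ∀ x u : ℝ, ‖Complex.exp (2 * Real.pi * Complex.I * x * u)‖ = 1 := by
    intro x u
    rw [show (2 * Real.pi * Complex.I * x * u : ℂ) = ((2 * Real.pi * x * u : ℝ) : ℂ) * Complex.I by
      push_cast; ring]
    exact Complex.norm_exp_ofReal_mul_I _
  have hbd : ∀ x, ‖g₀ x‖ ≤ 2 * R := by
    intro x
    rw [hg₀]
    refine (intervalIntegral.norm_integral_le_of_norm_le_const (C := 1) ?_).trans ?_
    · intro u _
      rw [norm_mul, hexp, mul_one, Complex.norm_real]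
      exact Real.abs_cos_le_one _
    · rw [abs_of_pos (by linarith)]; linarith
  set c : ℝ := Real.pi / (2 * R) with hc
  have hcpos : 0 < c := by rw [hc]; positivity
  have hdecay : ∀ x : ℝ, ‖g₀ x‖ ≤ (2 * R + (c ^ 2 * (2 * R) + 2 * c)) * (1 + x ^ 2)⁻¹ := by
    intro x
    have h1 : ((2 * Real.pi * x : ℝ) : ℂ) ^ 2 * g₀ x = (c : ℂ) ^ 2 * g₀ x -
        (c : ℂ) * (Complex.exp (2 * Real.pi * Complex.I * x * R) +
        Complex.exp (2 * Real.pi * Complex.I * x * (-R))) := by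
      rw [← hkey]; push_cast; ring
    have h2 : (2 * Real.pi * x) ^ 2 * ‖g₀ x‖ ≤ c ^ 2 * (2 * R) + 2 * c := by
      have h3 := congrArg norm h1
      rw [norm_mul, norm_pow, Complex.norm_real, Real.norm_eq_abs, sq_abs] at h3
      rw [h3]
      refine (norm_sub_le _ _).trans ?_
      rw [norm_mul, norm_mul, norm_pow, Complex.norm_real, Real.norm_eq_abs, abs_of_pos hcpos]
      have h4 : ‖Complex.exp (2 * Real.pi * Complex.I * x * R) +
        Complex.exp (2 * Real.pi * Complex.I * x * (-R))‖ ≤ 2 := by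
        refine (norm_add_le _ _).trans ?_
        have := hexp x (-R)
        push_cast at this
        rw [hexp, this]; norm_num
      have h5 := mul_le_mul_of_nonneg_left (hbd x) (sq_nonneg c)
      have h6 := mul_le_mul_of_nonneg_left h4 hcpos.le
      linarith
    have h7 : x ^ 2 * ‖g₀ x‖ ≤ (2 * Real.pi * x) ^ 2 * ‖g₀ x‖ := by
      apply mul_le_mul_of_nonneg_right _ (norm_nonneg _)
      have : 1 ≤ (2 * Real.pi) ^ 2 := by nlinarith [Real.pi_gt_three]
      rw [mul_pow]
      nlinarith [sq_nonneg x]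
    rw [← div_eq_mul_inv, le_div_iff₀ (by positivity)]
    linarith [hbd x]
  have hgi : Integrable g₀ :=
    (integrable_inv_one_add_sq.const_mul _).mono' hcont.aestronglyMeasurable
      (Filter.Eventually.of_forall hdecay)
  have hinvg : 𝓕⁻ g₀ = w R := by
    have := (w_cont R).fourierInv_fourier_eq (w_int hR) (by rw [hF]; exact hgi)
    rwa [hF] at this
  have hFg : 𝓕 g₀ = w R := by
    have := (w_cont R).fourier_fourierInv_eq (w_int hR) (by rw [hF]; exact hgi)
    rwa [hinv] at this
  have hgg : ∫ x, g₀ x ^ 2 = (R : ℂ) := by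
    have h := VectorFourier.integral_fourierIntegral_smul_eq_flip (μ := volume) (ν := volume)
      (L := innerₗ ℝ) Real.continuous_fourierChar
      (innerSL ℝ).continuous₂ (w_int hR) hgi
    rw [flip_innerₗ] at h
    have h' : ∫ x, 𝓕 (w R) x • g₀ x = ∫ x, w R x • 𝓕 g₀ x := h
    rw [hF, hFg] at h'
    simp_rw [smul_eq_mul] at h'
    simp_rw [pow_two]
    rw [h', w_fourierInv hR]
    have h8 := congrArg (fun t : ℝ => (t : ℂ)) (int_cos_sq hR)
    simp only [← intervalIntegral.integral_ofReal] at h8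
    rw [← h8]
    apply intervalIntegral.integral_congr
    intro u hu
    rw [Set.uIcc_of_le (by linarith)] at hu
    simp only
    rw [w_in hu.1 hu.2]
    push_cast; ring
  have he : ∀ v : ℝ, ∫ x : ℝ, Complex.exp (2 * Real.pi * Complex.I * x * v) * g₀ x = w R v := by
    intro v
    rw [← hinvg, Real.fourierInv_eq']
    congr 1
    ext x
    rw [smul_eq_mul]
    congr 2
    simp
    ring
  have hei : ∀ v : ℝ, Integrable
      (fun x : ℝ => Complex.exp (2 * Real.pi * Complex.I * x * v) * g₀ x) := by
    intro v
    refine hgi.bdd_mul (c := 1) (by fun_prop) (Filter.Eventually.of_forall fun x => ?_)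
    rw [hexp]
  have hg2 : Integrable (fun x => g₀ x ^ 2) := by
    simp_rw [pow_two]
    exact hgi.bdd_mul (c := 2 * R) hcont.aestronglyMeasurable (Filter.Eventually.of_forall hbd)
  have hcC : (c : ℂ) = Real.pi / (2 * R) := by rw [hc]; push_cast; ring
  constructor
  · have hΦ' : ∀ x, Φ x = ((c : ℂ) ^ 2 / (4 * Real.pi ^ 2) - β ^ 2) * g₀ x ^ 2 -
        (c : ℂ) / (4 * Real.pi ^ 2) *
          (Complex.exp (2 * Real.pi * Complex.I * x * R) * g₀ x +
          Complex.exp (2 * Real.pi * Complex.I * x * (-R : ℝ)) * g₀ x) := by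
      intro x
      rw [hΦ]
      have := hkey x
      push_cast
      generalize Complex.exp (2 * Real.pi * Complex.I * x * R) = e1 at this ⊢
      generalize Complex.exp (2 * Real.pi * Complex.I * x * (-R)) = e2 at this ⊢
      field_simp
      linear_combination (-g₀ x) * this
    simp_rw [hΦ']
    have hsum : Integrable (fun x : ℝ =>
        Complex.exp (2 * Real.pi * Complex.I * x * R) * g₀ x +
          Complex.exp (2 * Real.pi * Complex.I * x * (-R : ℝ)) * g₀ x) :=
      (hei R).add (hei (-R))
    rw [integral_sub (hg2.const_mul _) (hsum.const_mul _),
      integral_const_mul, integral_const_mul, integral_add (hei R) (hei (-R)), he, he, hgg,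
      w_right hR le_rfl, w_left hR le_rfl, hcC]
    push_cast
    field_simp
    ring
  · have h0 := hkey 0
    have hc0 : (c : ℂ) ≠ 0 := by exact_mod_cast hcpos.ne'
    have hg0 : g₀ 0 = 4 * R / Real.pi := by
      simp only [Complex.ofReal_zero, mul_zero, zero_mul, Complex.exp_zero] at h0
      have : (c : ℂ) * g₀ 0 = 2 := by
        apply mul_left_cancel₀ hc0
        linear_combination h0
      rw [hcC] at this
      field_simp at this ⊢
      linear_combination this
    rw [hΦ, hg0]
    push_cast
    field_simp
    ring
end

section
/- For λ > 0 not an odd integer and |u| ≤ 1, the series identity 2∑_{n odd ≥1} (−1)^{(n−1)/2} cos(πnu/2)/(n(n²−λ²)) = (π/(2λ² cos(πλ/2)))·(cos(πλu/2) − cos(πλ/2)) holds. -/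
open Real

lemma aux_integral (a b : ℝ) (hb : b ≠ 0) (hab : b ^ 2 - a ^ 2 ≠ 0) (hcb : Real.cos b = 0) :
    ∫ x in (-1 : ℝ)..1, Complex.exp (-(Complex.I * b * x)) *
      ((Real.cos (a * x) - Real.cos a : ℝ) : ℂ) =
    ((2 * (Real.cos a * Real.sin b * a ^ 2 / (b * (b ^ 2 - a ^ 2))) : ℝ) : ℂ) := by
  have hb' : (b : ℂ) ≠ 0 := by exact_mod_cast hb
  have hab' : (b : ℂ) ^ 2 - (a : ℂ) ^ 2 ≠ 0 := by exact_mod_cast hab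
  have hI : Complex.I ^ 2 = -1 := Complex.I_sq
  have key : ∀ x : ℝ, HasDerivAt (fun x : ℝ => Complex.exp (-(Complex.I * b * x)) *
      ((Complex.I * b * (Real.cos (a * x) : ℝ) - a * (Real.sin (a * x) : ℝ)) / (b ^ 2 - a ^ 2)
        - (Real.cos a : ℝ) * Complex.I / b))
      (Complex.exp (-(Complex.I * b * x)) * ((Real.cos (a * x) - Real.cos a : ℝ) : ℂ)) x := by
    intro x
    have h0 : HasDerivAt (fun x : ℝ => (x : ℂ)) 1 x := Complex.ofRealCLM.hasDerivAt
    have h1 : HasDerivAt (fun x : ℝ => Complex.exp (-(Complex.I * b * x)))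
        (Complex.exp (-(Complex.I * b * x)) * (-(Complex.I * b * 1))) x :=
      ((h0.const_mul (Complex.I * b)).neg).cexp
    have hax : HasDerivAt (fun x : ℝ => a * x) a x := by
      simpa using (hasDerivAt_id x).const_mul a
    have h2 := (hax.cos).ofReal_comp
    have h3 := (hax.sin).ofReal_comp
    have h4 := h1.mul ((((h2.const_mul (Complex.I * b)).sub (h3.const_mul (a : ℂ))).div_const
      ((b : ℂ) ^ 2 - a ^ 2)).sub_const ((Real.cos a : ℝ) * Complex.I / b : ℂ))
    refine h4.congr_deriv ?_
    simp only [Complex.ofReal_mul, Complex.ofReal_neg, Complex.ofReal_sub, Pi.sub_apply]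
    generalize Complex.exp (-(Complex.I * b * x)) = E
    generalize ((Real.cos (a * x) : ℝ) : ℂ) = c
    generalize ((Real.sin (a * x) : ℝ) : ℂ) = s
    generalize ((Real.cos a : ℝ) : ℂ) = C
    field_simp
    ring_nf
    simp only [hI]
    ring
  rw [intervalIntegral.integral_eq_sub_of_hasDerivAt (fun x _ => key x)
    (Continuous.intervalIntegrable (by fun_prop) _ _)]
  have e1 : Complex.exp (-(Complex.I * b * (1 : ℝ))) = -(Real.sin b : ℝ) * Complex.I := by
    have : -(Complex.I * b * (1 : ℝ)) = ((-b : ℝ) : ℂ) * Complex.I := by push_cast; ring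
    rw [this, Complex.exp_mul_I, ← Complex.ofReal_cos, ← Complex.ofReal_sin, Real.cos_neg,
      Real.sin_neg, hcb]
    simp
  have e2 : Complex.exp (-(Complex.I * b * (-1 : ℝ))) = (Real.sin b : ℝ) * Complex.I := by
    have : -(Complex.I * b * (-1 : ℝ)) = (b : ℂ) * Complex.I := by push_cast; ring
    rw [this, Complex.exp_mul_I, ← Complex.ofReal_cos, ← Complex.ofReal_sin, hcb]
    simp
  rw [e1, e2]
  simp only [mul_one, mul_neg, Real.cos_neg, Real.sin_neg, Complex.ofReal_mul, Complex.ofReal_neg,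
    Complex.ofReal_sub, Complex.ofReal_div, Complex.ofReal_pow, Complex.ofReal_ofNat]
  generalize ((Real.cos a : ℝ) : ℂ) = C
  generalize ((Real.sin a : ℝ) : ℂ) = S
  generalize ((Real.sin b : ℝ) : ℂ) = s
  field_simp
  ring_nf
  simp only [hI]
  ring

lemma aux_freq (lam : ℝ) (hlam : 0 < lam) (hodd : ∀ k : ℕ, lam ≠ 2 * k + 1) (m : ℤ) :
    (π * (2 * m + 1) / 2) ≠ 0 ∧ (π * (2 * m + 1) / 2) ^ 2 - (π * lam / 2) ^ 2 ≠ 0 ∧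
      Real.cos (π * (2 * m + 1) / 2) = 0 := by
  have hpi := Real.pi_pos
  refine ⟨?_, ?_, ?_⟩
  · have : ((2 * m + 1 : ℤ) : ℝ) ≠ 0 := by
      rw [Int.cast_ne_zero]; omega
    push_cast at this
    positivity
  · have h1 : (2 * m + 1 : ℝ) - lam ≠ 0 := by
      intro h
      have h0 : (0 : ℝ) < ((2 * m + 1 : ℤ) : ℝ) := by push_cast; linarith
      have h0' := Int.cast_pos.1 h0
      obtain ⟨k, rfl⟩ := Int.eq_ofNat_of_zero_le (show 0 ≤ m by omega)
      apply hodd k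
      push_cast at h
      linarith
    have h2 : (2 * m + 1 : ℝ) + lam ≠ 0 := by
      intro h
      have h0 : ((2 * m + 1 : ℤ) : ℝ) < 0 := by push_cast; linarith
      have h0' : (2 * m + 1 : ℤ) < 0 := by exact_mod_cast h0
      obtain ⟨k, hk⟩ := Int.eq_ofNat_of_zero_le (show 0 ≤ -m - 1 by omega)
      apply hodd k
      have : ((-m - 1 : ℤ) : ℝ) = ((k : ℤ) : ℝ) := by exact_mod_cast hk
      push_cast at this
      linarith
    have : (π * (2 * m + 1) / 2) ^ 2 - (π * lam / 2) ^ 2 =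
      (π / 2) ^ 2 * (((2 * m + 1 : ℝ) - lam) * ((2 * m + 1 : ℝ) + lam)) := by ring
    rw [this]
    exact mul_ne_zero (by positivity) (mul_ne_zero h1 h2)
  · rw [Real.cos_eq_zero_iff]
    exact ⟨m, by ring⟩

/-- the Fourier coefficients -/
noncomputable def auxCoeff (a b : ℝ) : ℝ :=
  Real.cos a * Real.sin b * a ^ 2 / (b * (b ^ 2 - a ^ 2))

lemma auxCoeff_neg (a b : ℝ) : auxCoeff a (-b) = auxCoeff a b := by
  simp only [auxCoeff, Real.sin_neg, neg_sq, neg_mul, mul_neg, neg_div_neg_eq]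

lemma aux_sin (k : ℕ) : Real.sin (π * (2 * k + 1) / 2) = (-1) ^ k := by
  have : π * (2 * k + 1) / 2 = π / 2 + k * π := by ring
  rw [this, Real.sin_add_nat_mul_pi]; simp

lemma auxCoeff_nat (lam : ℝ) (hlam : 0 < lam) (hodd : ∀ k : ℕ, lam ≠ 2 * k + 1) (k : ℕ) :
    auxCoeff (π * lam / 2) (π * (2 * k + 1) / 2) =
      2 * lam ^ 2 * Real.cos (π * lam / 2) / π *
        ((-1) ^ k / ((2 * k + 1) * ((2 * k + 1 : ℝ) ^ 2 - lam ^ 2))) := by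
  have hpi := Real.pi_ne_zero
  obtain ⟨-, h2, -⟩ := aux_freq lam hlam hodd k
  push_cast at h2
  have h1 : (2 * k + 1 : ℝ) ≠ 0 := by positivity
  have h3 : (2 * k + 1 : ℝ) ^ 2 - lam ^ 2 ≠ 0 := by
    intro h
    apply h2
    linear_combination (π / 2) ^ 2 * h
  have h4 : (π * (2 * k + 1) / 2) ^ 2 - (π * lam / 2) ^ 2 =
    (π / 2) ^ 2 * ((2 * k + 1 : ℝ) ^ 2 - lam ^ 2) := by ring
  rw [auxCoeff, aux_sin, h4]
  generalize (2 * k + 1 : ℝ) ^ 2 - lam ^ 2 = D at *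
  field_simp

lemma aux_summable_nat (lam : ℝ) :
    Summable fun k : ℕ => (-1 : ℝ) ^ k / ((2 * k + 1) * ((2 * k + 1 : ℝ) ^ 2 - lam ^ 2)) := by
  apply Summable.of_norm_bounded_eventually_nat (g := fun k : ℕ => 1 / (k : ℝ) ^ 2)
    (Real.summable_one_div_nat_pow.2 one_lt_two)
  filter_upwards [Filter.eventually_ge_atTop (max 1 ⌈|lam|⌉₊)] with k hk
  have hk1 : (1 : ℝ) ≤ k := by exact_mod_cast (le_max_left _ _).trans hk
  have hk2 : |lam| ≤ k := (Nat.le_ceil _).trans (by exact_mod_cast (le_max_right _ _).trans hk)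
  have hsq : lam ^ 2 ≤ (k : ℝ) ^ 2 := by
    rw [← sq_abs]; exact pow_le_pow_left₀ (abs_nonneg _) hk2 2
  have hD : (k : ℝ) ^ 2 ≤ (2 * k + 1 : ℝ) ^ 2 - lam ^ 2 := by nlinarith
  have hp : 0 < (k : ℝ) ^ 2 := by positivity
  have hle : (k : ℝ) ^ 2 ≤ (2 * k + 1) * ((2 * k + 1 : ℝ) ^ 2 - lam ^ 2) := by nlinarith
  rw [norm_div, norm_pow, norm_neg, norm_one, one_pow, Real.norm_of_nonneg (hp.le.trans hle)]
  exact one_div_le_one_div_of_le hp hle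

lemma aux_negsucc (lam : ℝ) (k : ℕ) :
    auxCoeff (π * lam / 2) (π * (2 * ((-(k + 1 : ℤ) : ℤ) : ℝ) + 1) / 2) =
      auxCoeff (π * lam / 2) (π * (2 * k + 1) / 2) := by
  rw [← auxCoeff_neg]
  congr 1
  push_cast
  ring

lemma aux_summable_int (lam : ℝ) (hlam : 0 < lam) (hodd : ∀ k : ℕ, lam ≠ 2 * k + 1) :
    Summable fun m : ℤ => auxCoeff (π * lam / 2) (π * (2 * m + 1) / 2) := by
  have h : Summable fun k : ℕ => auxCoeff (π * lam / 2) (π * (2 * k + 1) / 2) := by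
    simp_rw [auxCoeff_nat lam hlam hodd]
    exact (aux_summable_nat lam).mul_left _
  apply Summable.of_nat_of_neg_add_one
  · simpa using h
  · simp_rw [aux_negsucc]; exact h

lemma aux_main (lam u : ℝ) (hlam : 0 < lam)
    (hodd : ∀ k : ℕ, lam ≠ 2 * k + 1) (hu : u ∈ Set.Ico (-1 : ℝ) 1) :
    HasSum (fun m : ℤ => (auxCoeff (π * lam / 2) (π * (2 * m + 1) / 2) : ℂ) *
      Complex.exp (Complex.I * π * (2 * m + 1) * u / 2))
      ((Real.cos (π * lam / 2 * u) - Real.cos (π * lam / 2) : ℝ) : ℂ) := by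
  have : Fact ((0 : ℝ) < 2) := ⟨two_pos⟩
  set a := π * lam / 2 with ha
  let g : ℝ → ℂ := fun x => Complex.exp (-(Complex.I * π * x / 2)) *
      ((Real.cos (a * x) - Real.cos a : ℝ) : ℂ)
  have hg : Continuous g := by fun_prop
  have hc : Continuous (AddCircle.liftIco 2 (-1) g) := by
    apply AddCircle.liftIco_continuous
    · have : (-1 + 2 : ℝ) = 1 := by norm_num
      simp [g, this]
    · exact hg.continuousOn
  let F : C(AddCircle (2 : ℝ), ℂ) := ⟨_, hc⟩
  have hF : ∀ m : ℤ, fourierCoeff F m = (auxCoeff a (π * (2 * m + 1) / 2) : ℂ) := by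
    intro m
    obtain ⟨h1, h2, h3⟩ := aux_freq lam hlam hodd m
    have := aux_integral a _ h1 h2 h3
    change fourierCoeff (AddCircle.liftIco 2 (-1) g) m = _
    rw [fourierCoeff_liftIco_eq, fourierCoeffOn_eq_integral]
    have e : ∀ x : ℝ, fourier (-m) (x : AddCircle (-1 + 2 - -1 : ℝ)) • g x =
        Complex.exp (-(Complex.I * ((π * (2 * m + 1) / 2 : ℝ) : ℂ) * x)) *
      ((Real.cos (a * x) - Real.cos a : ℝ) : ℂ) := by
      intro x
      rw [fourier_coe_apply, smul_eq_mul, ← mul_assoc, ← Complex.exp_add]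
      congr 2
      push_cast
      ring
    simp_rw [e]
    rw [show (-1 + 2 : ℝ) = 1 by norm_num, this, auxCoeff, Complex.real_smul]
    push_cast
    ring
  have hs : Summable (fourierCoeff F) := by
    have := Complex.ofRealCLM.summable (aux_summable_int lam hlam hodd)
    refine this.congr fun m => ?_
    rw [hF]; rfl
  have hsum := has_pointwise_sum_fourier_series_of_summable hs (u : AddCircle (2 : ℝ))
  have hFu : F (u : AddCircle (2 : ℝ)) = g u :=
    AddCircle.liftIco_coe_apply (p := 2) (a := -1) (f := g) ⟨hu.1, lt_of_lt_of_eq hu.2 (by norm_num)⟩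
  rw [hFu] at hsum
  have h5 := hsum.mul_left (Complex.exp (Complex.I * π * u / 2))
  convert h5 using 1
  · rfl
  · funext m
    rw [hF, fourier_coe_apply, smul_eq_mul, mul_left_comm, ← Complex.exp_add]
    congr 2
    push_cast
    ring
  · simp only [g]
    rw [← mul_assoc, ← Complex.exp_add, add_neg_cancel, Complex.exp_zero, one_mul]

lemma aux_real (lam u : ℝ) (hlam : 0 < lam)
    (hodd : ∀ k : ℕ, lam ≠ 2 * k + 1) (hu : u ∈ Set.Ico (-1 : ℝ) 1) :
    2 * ∑' k : ℕ, (-1 : ℝ) ^ k * Real.cos (Real.pi * (2 * k + 1) * u / 2) /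
        ((2 * k + 1) * ((2 * k + 1 : ℝ) ^ 2 - lam ^ 2))
      = (Real.pi / (2 * lam ^ 2 * Real.cos (Real.pi * lam / 2))) *
        (Real.cos (Real.pi * lam * u / 2) - Real.cos (Real.pi * lam / 2)) := by
  have hpi := Real.pi_ne_zero
  have hC : Real.cos (π * lam / 2) ≠ 0 := by
    intro h
    obtain ⟨m, hm⟩ := Real.cos_eq_zero_iff.1 h
    apply (aux_freq lam hlam hodd m).2.1
    rw [hm]; ring
  have h := (aux_main lam u hlam hodd hu).nat_add_neg_add_one
  have h' : HasSum (fun k : ℕ => ((2 * lam ^ 2 * Real.cos (π * lam / 2) / π * 2 *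
      ((-1 : ℝ) ^ k * Real.cos (Real.pi * (2 * k + 1) * u / 2) /
        ((2 * k + 1) * ((2 * k + 1 : ℝ) ^ 2 - lam ^ 2))) : ℝ) : ℂ))
      ((Real.cos (π * lam / 2 * u) - Real.cos (π * lam / 2) : ℝ) : ℂ) := by
    convert h using 1
    funext k
    rw [aux_negsucc, Int.cast_natCast, auxCoeff_nat lam hlam hodd]
    have e1 : Complex.I * π * (2 * ((k : ℤ) : ℂ) + 1) * u / 2 =
      ((π * (2 * k + 1) * u / 2 : ℝ) : ℂ) * Complex.I := by push_cast; ring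
    have e2 : Complex.I * π * (2 * ((-(k + 1 : ℤ) : ℤ) : ℂ) + 1) * u / 2 =
      -((π * (2 * k + 1) * u / 2 : ℝ) : ℂ) * Complex.I := by push_cast; ring
    rw [e1, e2, ← mul_add, ← Complex.two_cos, ← Complex.ofReal_cos]
    push_cast
    ring
  have h'' := (Complex.hasSum_ofReal.1 h').tsum_eq
  rw [tsum_mul_left] at h''
  rw [show π * lam * u / 2 = π * lam / 2 * u by ring, ← h'']
  generalize (∑' k : ℕ, (-1 : ℝ) ^ k * Real.cos (Real.pi * (2 * k + 1) * u / 2) /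
        ((2 * k + 1) * ((2 * k + 1 : ℝ) ^ 2 - lam ^ 2))) = S
  field_simp

/-- For `λ > 0` not an odd integer and `|u| ≤ 1`,
`2 ∑_{n odd ≥ 1} (-1)^{(n-1)/2} cos(πnu/2)/(n(n²-λ²))
  = (π/(2λ² cos(πλ/2))) (cos(πλu/2) - cos(πλ/2))` (sum written over `n = 2k+1`). -/
theorem odd_cosine_series_identity (lam u : ℝ) (hlam : 0 < lam)
    (hodd : ∀ k : ℕ, lam ≠ 2 * k + 1) (hu : |u| ≤ 1) :
    2 * ∑' k : ℕ, (-1 : ℝ) ^ k * Real.cos (Real.pi * (2 * k + 1) * u / 2) /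
        ((2 * k + 1) * ((2 * k + 1 : ℝ) ^ 2 - lam ^ 2))
      = (Real.pi / (2 * lam ^ 2 * Real.cos (Real.pi * lam / 2))) *
        (Real.cos (Real.pi * lam * u / 2) - Real.cos (Real.pi * lam / 2)) := by
  obtain ⟨h1, h2⟩ := abs_le.1 hu
  rcases h2.lt_or_eq with h | h
  · exact aux_real lam u hlam hodd ⟨h1, h⟩
  · have := aux_real lam (-u) hlam hodd ⟨by linarith, by linarith⟩
    simpa only [mul_neg, neg_div, Real.cos_neg] using this
end
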